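/- Let P be a Köthe set on an index set I, and let k, l be real numbers with 0 < k < l. Suppose P^{[l]} ≺ P^{[k]}, i.e., for every p ∈ P there exist q ∈ P and C > 0 with p_i^l ≤ C q_i^k for all i ∈ I. Then P^{[2]} ≺ P, i.e., for every p ∈ P there exist q ∈ P and C > 0 with p_i² ≤ C q_i for all i ∈ I. -/

import Mathlib

/-!
Taking `k`-th roots in the hypothesis gives `P^{[a]} ≺ P` with `a = l / k > 1`, and iterating gives
`P^{[a ^ n]} ≺ P` for every `n`. For `1 ≤ s ≤ a ^ n` the power `p ^ s` is at most `p` where `p ≤ 1`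
and at most `p ^ (a ^ n)` where `p ≥ 1`, so directedness of `P` yields `P^{[s]} ≺ P`. Taking `t`-th
powers reaches every pair of exponents `0 < t ≤ s`.
-/

section

variable {I : Type*} {P Q R : Set (I → ℝ)} {α β γ : ℝ}

/-- The relation `P ≺ Q` between families of weights: every member of `P` is dominated by a positive
multiple of a member of `Q`. It is defined for arbitrary families of real-valued functions,
not only for Köthe sets. -/
def KothePrec (P Q : Set (I → ℝ)) : Prop :=
  ∀ p ∈ P, ∃ q ∈ Q, ∃ C > (0 : ℝ), ∀ i, p i ≤ C * q i

/-- The family `P^{[α]}` of pointwise `α`-th powers of the members of `P`. The power is `Real.rpow`,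
so it has its usual meaning only when the members of `P` are nonnegative. -/
def kothePow (P : Set (I → ℝ)) (α : ℝ) : Set (I → ℝ) :=
  (fun p i ↦ p i ^ α) '' P

theorem kothePrec_kothePow_iff :
    KothePrec (kothePow P α) (kothePow Q β) ↔
      ∀ p ∈ P, ∃ q ∈ Q, ∃ C > (0 : ℝ), ∀ i, p i ^ α ≤ C * q i ^ β := by
  simp only [KothePrec, kothePow, Set.forall_mem_image, Set.exists_mem_image]

theorem kothePow_one : kothePow P 1 = P := by
  simp [kothePow]

theorem kothePow_nonneg (hP : ∀ p ∈ P, 0 ≤ p) : ∀ p ∈ kothePow P α, 0 ≤ p :=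
  Set.forall_mem_image.2 fun p hp i ↦ Real.rpow_nonneg (hP p hp i) α

theorem kothePow_mul (hP : ∀ p ∈ P, 0 ≤ p) :
    kothePow P (α * β) = kothePow (kothePow P α) β := by
  simp only [kothePow, Set.image_image]
  exact Set.image_congr fun p hp ↦ funext fun i ↦ Real.rpow_mul (hP p hp i) α β

theorem rpow_le_rpow_add_rpow {x : ℝ} (hx : 0 ≤ x) (hα : 0 ≤ α) (hαβ : α ≤ β) (hβγ : β ≤ γ) :
    x ^ β ≤ x ^ α + x ^ γ := by
  rcases le_total x 1 with hx1 | hx1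
  · exact le_add_of_le_of_nonneg (Real.rpow_le_rpow_of_exponent_ge' hx hx1 hα hαβ)
      (Real.rpow_nonneg hx γ)
  · exact le_add_of_nonneg_of_le (Real.rpow_nonneg hx α)
      (Real.rpow_le_rpow_of_exponent_le hx1 hβγ)

namespace KothePrec

theorem refl (P : Set (I → ℝ)) : KothePrec P P :=
  fun p hp ↦ ⟨p, hp, 1, one_pos, fun i ↦ (one_mul (p i)).ge⟩

theorem trans (hPQ : KothePrec P Q) (hQR : KothePrec Q R) : KothePrec P R := by
  intro p hp
  obtain ⟨q, hq, C, hC, hpq⟩ := hPQ p hp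
  obtain ⟨r, hr, D, hD, hqr⟩ := hQR q hq
  refine ⟨r, hr, C * D, mul_pos hC hD, fun i ↦ ?_⟩
  calc p i ≤ C * q i := hpq i
    _ ≤ C * (D * r i) := by gcongr; exact hqr i
    _ = C * D * r i := (mul_assoc C D (r i)).symm

theorem rpow (hPQ : KothePrec P Q) (hP : ∀ p ∈ P, 0 ≤ p) (hα : 0 ≤ α) :
    KothePrec (kothePow P α) (kothePow Q α) := by
  refine kothePrec_kothePow_iff.2 fun p hp ↦ ?_
  obtain ⟨q, hq, C, hC, hpq⟩ := hPQ p hp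
  refine ⟨q, hq, C ^ α, Real.rpow_pos_of_pos hC α, fun i ↦ ?_⟩
  have hqi : 0 ≤ q i := nonneg_of_mul_nonneg_right ((hP p hp i).trans (hpq i)) hC
  calc p i ^ α ≤ (C * q i) ^ α := Real.rpow_le_rpow (hP p hp i) (hpq i) hα
    _ = C ^ α * q i ^ α := Real.mul_rpow hC.le hqi

theorem kothePow_div (h : KothePrec (kothePow P α) (kothePow Q β))
    (hP : ∀ p ∈ P, 0 ≤ p) (hQ : ∀ q ∈ Q, 0 ≤ q) (hβ : 0 < β) :
    KothePrec (kothePow P (α / β)) Q := by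
  have hroot := h.rpow (kothePow_nonneg hP) (inv_nonneg.2 hβ.le)
  rwa [← kothePow_mul hP, ← kothePow_mul hQ, mul_inv_cancel₀ hβ.ne', kothePow_one,
    ← div_eq_mul_inv] at hroot

theorem kothePow_pow (h : KothePrec (kothePow P α) P) (hP : ∀ p ∈ P, 0 ≤ p) (hα : 0 ≤ α)
    (n : ℕ) : KothePrec (kothePow P (α ^ n)) P := by
  induction n with
  | zero => simpa only [pow_zero, kothePow_one] using refl P
  | succ n ih =>
    rw [pow_succ, kothePow_mul hP]
    exact (ih.rpow (kothePow_nonneg hP) hα).trans h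

theorem kothePow_of_le_of_le (hPα : KothePrec (kothePow P α) Q)
    (hPγ : KothePrec (kothePow P γ) Q) (hP : ∀ p ∈ P, 0 ≤ p) (hQ : DirectedOn (· ≤ ·) Q)
    (hα : 0 ≤ α) (hαβ : α ≤ β) (hβγ : β ≤ γ) : KothePrec (kothePow P β) Q := by
  refine Set.forall_mem_image.2 fun p hp ↦ ?_
  obtain ⟨q, hq, C, hC, hpq⟩ := hPα _ (Set.mem_image_of_mem _ hp)
  obtain ⟨q', hq', D, hD, hpq'⟩ := hPγ _ (Set.mem_image_of_mem _ hp)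
  obtain ⟨r, hr, hqr, hqr'⟩ := hQ q hq q' hq'
  refine ⟨r, hr, C + D, add_pos hC hD, fun i ↦ ?_⟩
  calc p i ^ β ≤ p i ^ α + p i ^ γ := rpow_le_rpow_add_rpow (hP p hp i) hα hαβ hβγ
    _ ≤ C * q i + D * q' i := add_le_add (hpq i) (hpq' i)
    _ ≤ C * r i + D * r i := by gcongr; exacts [hqr i, hqr' i]
    _ = (C + D) * r i := (add_mul C D (r i)).symm

theorem kothePow_of_one_le (h : KothePrec (kothePow P α) P)
    (hP : ∀ p ∈ P, 0 ≤ p) (hdir : DirectedOn (· ≤ ·) P) (hα : 1 < α) (hβ : 1 ≤ β) :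
    KothePrec (kothePow P β) P := by
  obtain ⟨n, hn⟩ := pow_unbounded_of_one_lt β hα
  have hone : KothePrec (kothePow P 1) P := kothePow_one.symm ▸ refl P
  exact hone.kothePow_of_le_of_le (h.kothePow_pow hP (zero_le_one.trans hα.le) n) hP hdir
    zero_le_one hβ hn.le

end KothePrec

theorem kothe_pow_prec_general {k l s t : ℝ} (hP : ∀ p ∈ P, 0 ≤ p) (hdir : DirectedOn (· ≤ ·) P)
    (hk : 0 < k) (hkl : k < l) (h : KothePrec (kothePow P l) (kothePow P k))
    (ht : 0 < t) (hts : t ≤ s) : KothePrec (kothePow P s) (kothePow P t) := by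
  have hratio : KothePrec (kothePow P (s / t)) P :=
    (h.kothePow_div hP hP hk).kothePow_of_one_le hP hdir ((one_lt_div hk).2 hkl)
      ((one_le_div ht).2 hts)
  have hpow := hratio.rpow (kothePow_nonneg hP) ht.le
  rwa [← kothePow_mul hP, div_mul_cancel₀ s ht.ne'] at hpow

end

/-- If `P^{[l]} ≺ P^{[k]}` for some reals `0 < k < l`, then `P^{[2]} ≺ P`. -/
theorem kothe_pow_prec {I : Type*} (P : Set (I → ℝ)) (k l : ℝ)
    (hk : 0 < k) (hkl : k < l)
    (hpos : ∀ p ∈ P, ∀ i, 0 ≤ p i)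
    (hP1 : ∀ i, ∃ p ∈ P, 0 < p i)
    (hP2 : ∀ p ∈ P, ∀ q ∈ P, ∃ r ∈ P, ∀ i, max (p i) (q i) ≤ r i)
    (h : ∀ p ∈ P, ∃ q ∈ P, ∃ C > (0 : ℝ), ∀ i, p i ^ l ≤ C * q i ^ k) :
    ∀ p ∈ P, ∃ q ∈ P, ∃ C > (0 : ℝ), ∀ i, p i ^ 2 ≤ C * q i := by
  have hdir : DirectedOn (· ≤ ·) P := by
    simpa only [DirectedOn, Pi.le_def, max_le_iff, forall_and] using hP2
  simpa only [kothePrec_kothePow_iff, Real.rpow_two, Real.rpow_one] using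
    kothe_pow_prec_general hpos hdir hk hkl (kothePrec_kothePow_iff.2 h) one_pos one_le_two
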